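/- Continuum fixed point positivity. Let ω be an averaging kernel (not necessarily regular) and (hf, hg) ∈ 𝒳². Suppose there exist (0,1)-interpolating F, G ∈ Ψ with G(x) = hg((F ⊗ ω)(x)) and F(x) = hf((G ⊗ ω)(x)) for all x ∈ ℝ (a (0,1)-interpolating spatial fixed point of the continuum spatially coupled recursion). Then Φ(hf, hg; u, v) ≥ 0 for all (u, v) ∈ [0,1]², and A(hf, hg) = 0. -/

import Mathlib

open MeasureTheory Filter Set

noncomputable section

/-- Convolution `(f ⊗ ω)(x) = ∫ y, f y · ω (x − y)`. -/
def conv (f ω : ℝ → ℝ) (x : ℝ) : ℝ := ∫ y : ℝ, f y * ω (x - y)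

/-- `ω` is an averaging kernel: even, nonnegative, of bounded variation, integrating to 1. -/
def IsAveragingKernel (ω : ℝ → ℝ) : Prop :=
  (∀ x, ω (-x) = ω x) ∧ (∀ x, 0 ≤ ω x) ∧ BoundedVariationOn ω Set.univ ∧
    MeasureTheory.Integrable ω ∧ (∫ x : ℝ, ω x) = 1

/-- The essential supremum `‖ω‖∞` of a kernel, as a real number. -/
def kerSup (ω : ℝ → ℝ) : ℝ := (eLpNorm ω ⊤ MeasureTheory.volume).toReal

/-- `ω` is regular: for some `W ∈ (0,∞]`, it vanishes outside `[−W, W]` and is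
positive on `(−W, W)` (the case `W = ∞` being that `ω` is everywhere positive). -/
def IsRegularKernel (ω : ℝ → ℝ) : Prop :=
  (∀ x, 0 < ω x) ∨
    ∃ W : ℝ, 0 < W ∧ (∀ x, W < |x| → ω x = 0) ∧ (∀ x, |x| < W → 0 < ω x)

/-- Membership in `𝒳`: nondecreasing self-maps of `[0,1]`. -/
def MemX (h : ℝ → ℝ) : Prop :=
  MonotoneOn h (Icc 0 1) ∧ MapsTo h (Icc 0 1) (Icc 0 1)

/-- Left limit `h(u−)` of `h ∈ 𝒳` at `u ∈ [0,1]`, with the convention `h(0−) = 0`. -/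
def lm (h : ℝ → ℝ) (u : ℝ) : ℝ := if u ≤ 0 then 0 else sSup (h '' Ico 0 u)

/-- Right limit `h(u+)` of `h ∈ 𝒳` at `u ∈ [0,1]`, with the convention `h(1+) = 1`. -/
def rm (h : ℝ → ℝ) (u : ℝ) : ℝ := if 1 ≤ u then 1 else sInf (h '' Ioc u 1)

/-- A canonical generalized inverse of `h ∈ 𝒳` (any valid inverse has the same integrals,
so the potential below is unambiguous). -/
def Xinv (h : ℝ → ℝ) (v : ℝ) : ℝ := sInf ({1} ∪ {u ∈ Icc (0:ℝ) 1 | v ≤ h u})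

/-- The potential `Φ(hf, hg; u, v) = ∫₀ᵘ hg⁻¹ + ∫₀ᵛ hf⁻¹ − u·v`. -/
def Pot (hf hg : ℝ → ℝ) (u v : ℝ) : ℝ :=
  (∫ x in (0:ℝ)..u, Xinv hg x) + (∫ x in (0:ℝ)..v, Xinv hf x) - u * v

/-- `A(hf, hg) = Φ(hf, hg; 1, 1)`. -/
def Agap (hf hg : ℝ → ℝ) : ℝ := Pot hf hg 1 1

/-- `(u,v)` is a crossing point of `(hf, hg)`:
`u ∈ [hg(v−), hg(v+)]` and `v ∈ [hf(u−), hf(u+)]`. -/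
def IsCrossing (hf hg : ℝ → ℝ) (u v : ℝ) : Prop :=
  u ∈ Icc (0:ℝ) 1 ∧ v ∈ Icc (0:ℝ) 1 ∧
    u ∈ Icc (lm hg v) (rm hg v) ∧ v ∈ Icc (lm hf u) (rm hf u)

/-- The strictly positive gap condition: there is a nontrivial crossing point, and every
nontrivial crossing point satisfies `Φ(hf, hg; u, v) > max {0, A(hf, hg)}`. -/
def StrictPosGap (hf hg : ℝ → ℝ) : Prop :=
  (∃ u v, IsCrossing hf hg u v ∧ ¬(u = 0 ∧ v = 0) ∧ ¬(u = 1 ∧ v = 1)) ∧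
    ∀ u v, IsCrossing hf hg u v → ¬(u = 0 ∧ v = 0) → ¬(u = 1 ∧ v = 1) →
      max 0 (Agap hf hg) < Pot hf hg u v

/-- Membership in `Ψ`: nondecreasing functions `ℝ → [0,1]`. -/
def MemPsi (f : ℝ → ℝ) : Prop := Monotone f ∧ ∀ x, f x ∈ Icc (0:ℝ) 1

/-- `f` is `(a,b)`-interpolating: limits `a` at `−∞` and `b` at `+∞`. -/
def Interpolates (f : ℝ → ℝ) (a b : ℝ) : Prop :=
  Filter.Tendsto f Filter.atBot (nhds a) ∧ Filter.Tendsto f Filter.atTop (nhds b)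

def Om (ω : ℝ → ℝ) (z : ℝ) : ℝ := ∫ y in Iic z, ω y

def qi (F : ℝ → ℝ) (t : ℝ) : ℝ := sInf {x | t ≤ F x}

theorem qi_bdd {F : ℝ → ℝ} (hF : MemPsi F) (hFi : Interpolates F 0 1) {t : ℝ}
    (ht : t ∈ Ioo (0:ℝ) 1) : BddBelow {x | t ≤ F x} := by
  obtain ⟨a, ha⟩ := (hFi.1.eventually (gt_mem_nhds ht.1)).exists
  refine ⟨a, fun x hx => ?_⟩
  by_contra h
  push Not at h
  have := hF.1 h.le
  simp only [mem_ofPred_eq] at hx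
  linarith

theorem qi_ne {F : ℝ → ℝ} (hFi : Interpolates F 0 1) {t : ℝ}
    (ht : t ∈ Ioo (0:ℝ) 1) : {x | t ≤ F x}.Nonempty := by
  obtain ⟨a, ha⟩ := (hFi.2.eventually (lt_mem_nhds ht.2)).exists
  exact ⟨a, ha.le⟩

theorem qi_le {F : ℝ → ℝ} (hF : MemPsi F) (hFi : Interpolates F 0 1) {t : ℝ}
    (ht : t ∈ Ioo (0:ℝ) 1) {y : ℝ} (h : t ≤ F y) : qi F t ≤ y :=
  csInf_le (qi_bdd hF hFi ht) h

theorem lt_of_qi_lt {F : ℝ → ℝ} (hF : MemPsi F) (hFi : Interpolates F 0 1) {t : ℝ}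
    (ht : t ∈ Ioo (0:ℝ) 1) {y : ℝ} (h : qi F t < y) : t ≤ F y := by
  obtain ⟨a, ha, hay⟩ := exists_lt_of_csInf_lt (qi_ne hFi ht) h
  exact le_trans ha (hF.1 hay.le)

theorem qi_mono {F : ℝ → ℝ} (hF : MemPsi F) (hFi : Interpolates F 0 1) :
    MonotoneOn (qi F) (Ioo 0 1) := by
  intro s hs t ht hst
  exact csInf_le_csInf (qi_bdd hF hFi hs) (qi_ne hFi ht) (fun x hx => le_trans hst hx)

theorem qi_aem {F : ℝ → ℝ} (hF : MemPsi F) (hFi : Interpolates F 0 1) :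
    AEMeasurable (qi F) (volume.restrict (Ioo 0 1)) :=
  aemeasurable_restrict_of_monotoneOn measurableSet_Ioo (qi_mono hF hFi)

theorem Om_cont {ω : ℝ → ℝ} (hω : IsAveragingKernel ω) : Continuous (Om ω) := by
  have h := hω.2.2.2.1
  have : Om ω = fun z => (∫ y in Iic (0:ℝ), ω y) + ∫ y in (0:ℝ)..z, ω y := by
    funext z
    rw [Om, ← intervalIntegral.integral_Iic_sub_Iic h.integrableOn h.integrableOn]
    ring
  rw [this]
  exact continuous_const.add (intervalIntegral.continuous_primitive
    (fun a b => h.intervalIntegrable) 0)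

theorem Om_nonneg {ω : ℝ → ℝ} (hω : IsAveragingKernel ω) (z : ℝ) : 0 ≤ Om ω z :=
  integral_nonneg hω.2.1

theorem Om_add {ω : ℝ → ℝ} (hω : IsAveragingKernel ω) (z : ℝ) : Om ω z + Om ω (-z) = 1 := by
  have h := hω.2.2.2.1
  have h1 : Om ω (-z) = ∫ y in Ioi z, ω y := by
    rw [Om]
    have := integral_comp_neg_Iic (-z) ω
    simp only [hω.1, neg_neg] at this
    exact this
  rw [h1, Om, ← hω.2.2.2.2, ← compl_Iic]
  exact integral_add_compl measurableSet_Iic h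

theorem Om_le {ω : ℝ → ℝ} (hω : IsAveragingKernel ω) (z : ℝ) : Om ω z ≤ 1 := by
  linarith [Om_add hω z, Om_nonneg hω (-z)]

theorem conv_eq {ω F : ℝ → ℝ} (hω : IsAveragingKernel ω) (hF : MemPsi F)
    (hFi : Interpolates F 0 1) (x : ℝ) :
    conv F ω x = ∫ t in Ioo (0:ℝ) 1, Om ω (x - qi F t) := by
  have hi : Integrable (fun y => ω (x - y)) := hω.2.2.2.1.comp_sub_left x
  have hFm : Measurable F := hF.1.measurable
  set K : ℝ → ℝ → ℝ := fun y t => indicator {p : ℝ × ℝ | p.2 ≤ F p.1} (fun p => ω (x - p.1)) (y, t)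
    with hK
  have hS : MeasurableSet {p : ℝ × ℝ | p.2 ≤ F p.1} :=
    measurableSet_le measurable_snd (hFm.comp measurable_fst)
  have hint : Integrable (Function.uncurry K) (volume.prod (volume.restrict (Ioo (0:ℝ) 1))) := by
    have : Integrable (fun p : ℝ × ℝ => ω (x - p.1)) (volume.prod (volume.restrict (Ioo (0:ℝ) 1))) :=
      hi.comp_fst _
    exact this.indicator hS
  have e1 : ∀ y, F y * ω (x - y) = ∫ t in Ioo (0:ℝ) 1, K y t := by
    intro y
    have h1 : ∀ t, K y t = indicator (Iic (F y)) (fun _ => ω (x - y)) t := by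
      intro t
      simp only [hK, indicator_apply, mem_ofPred_eq, mem_Iic]
    simp_rw [h1]
    rw [← integral_Ioc_eq_integral_Ioo, setIntegral_indicator measurableSet_Iic]
    have : Ioc (0:ℝ) 1 ∩ Iic (F y) = Ioc 0 (F y) := by
      ext t
      have := (hF.2 y).2
      simp only [mem_inter_iff, mem_Ioc, mem_Iic]
      constructor
      · rintro ⟨⟨a, b⟩, c⟩; exact ⟨a, c⟩
      · rintro ⟨a, c⟩; exact ⟨⟨a, c.trans this⟩, c⟩
    rw [this]
    simp [(hF.2 y).1]
  unfold conv
  simp_rw [e1]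
  rw [integral_integral_swap hint]
  refine setIntegral_congr_fun measurableSet_Ioo fun t ht => ?_
  have h2 : (fun y => K y t) =ᵐ[volume] indicator (Ici (qi F t)) (fun y => ω (x - y)) := by
    have : ∀ᵐ y : ℝ, y ≠ qi F t := by simp [ae_iff, measure_singleton]
    filter_upwards [this] with y hy
    simp only [hK, indicator_apply, mem_ofPred_eq, mem_Ici]
    refine if_congr ⟨fun h => qi_le hF hFi ht h, fun h => ?_⟩ rfl rfl
    exact lt_of_qi_lt hF hFi ht (lt_of_le_of_ne h (Ne.symm hy))
  rw [integral_congr_ae h2, integral_indicator measurableSet_Ici, Om]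
  have h3 := integral_sub_left_eq_self (indicator (Iic (x - qi F t)) ω) volume x
  rw [← integral_indicator measurableSet_Iic, ← h3, ← integral_indicator measurableSet_Ici]
  congr 1
  funext y
  simp only [indicator_apply, mem_Ici, mem_Iic]
  exact if_congr (by constructor <;> intro h <;> linarith) rfl rfl

theorem H_meas {ω G : ℝ → ℝ} (hω : IsAveragingKernel ω) (hG : MemPsi G)
    (hGi : Interpolates G 0 1) (x : ℝ) :
    AEStronglyMeasurable (fun t => Om ω (x - qi G t)) (volume.restrict (Ioo 0 1)) :=
  ((Om_cont hω).measurable.comp_aemeasurable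
    (aemeasurable_const.sub (qi_aem hG hGi))).aestronglyMeasurable

theorem conv_cont {ω F : ℝ → ℝ} (hω : IsAveragingKernel ω) (hF : MemPsi F)
    (hFi : Interpolates F 0 1) : Continuous (conv F ω) := by
  have : conv F ω = fun x => ∫ t in Ioo (0:ℝ) 1, Om ω (x - qi F t) :=
    funext (conv_eq hω hF hFi)
  rw [this]
  refine continuous_of_dominated (bound := fun _ => 1) (fun x => H_meas hω hF hFi x) ?_ ?_ ?_
  · intro x
    refine Eventually.of_forall fun t => ?_
    rw [Real.norm_of_nonneg (Om_nonneg hω _)]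
    exact Om_le hω _
  · exact integrable_const _
  · exact Eventually.of_forall fun t => (Om_cont hω).comp (by fun_prop)

theorem conv_mem {ω F : ℝ → ℝ} (hω : IsAveragingKernel ω) (hF : MemPsi F) (x : ℝ) :
    conv F ω x ∈ Icc (0:ℝ) 1 := by
  have hi : Integrable (fun y => ω (x - y)) := hω.2.2.2.1.comp_sub_left x
  constructor
  · exact integral_nonneg fun y => mul_nonneg (hF.2 y).1 (hω.2.1 _)
  · have h3 := integral_sub_left_eq_self ω volume x
    rw [← hω.2.2.2.2, ← h3]
    refine integral_mono_of_nonneg (Eventually.of_forall fun y => mul_nonneg (hF.2 y).1 (hω.2.1 _))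
      hi (Eventually.of_forall fun y => ?_)
    exact mul_le_of_le_one_left (hω.2.1 _) (hF.2 y).2

theorem Xinv_eq {ω hg F G : ℝ → ℝ} (hω : IsAveragingKernel ω) (hhg : MemX hg)
    (hF : MemPsi F) (hG : MemPsi G)
    (hFi : Interpolates F 0 1) (hGi : Interpolates G 0 1)
    (hfixG : ∀ x, G x = hg (conv F ω x)) {s : ℝ} (hs : s ∈ Ioo (0:ℝ) 1) :
    Xinv hg s = ∫ t in Ioo (0:ℝ) 1, Om ω (qi G s - qi F t) := by
  rw [← conv_eq hω hF hFi]
  have hc := (conv_cont hω hF hFi).tendsto (qi G s)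
  have hb : BddBelow ({1} ∪ {u ∈ Icc (0:ℝ) 1 | s ≤ hg u}) := by
    refine ⟨0, ?_⟩
    rintro u (hu | hu)
    · rw [mem_singleton_iff.1 hu]; norm_num
    · exact hu.1.1
  apply le_antisymm
  · refine ge_of_tendsto (hc.mono_left (nhdsWithin_le_nhds (s := Ioi (qi G s)))) ?_
    filter_upwards [self_mem_nhdsWithin] with x hx
    refine csInf_le hb (Or.inr ⟨conv_mem hω hF x, ?_⟩)
    rw [← hfixG]
    exact lt_of_qi_lt hG hGi hs hx
  · refine le_of_tendsto (hc.mono_left (nhdsWithin_le_nhds (s := Iio (qi G s)))) ?_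
    filter_upwards [self_mem_nhdsWithin] with x hx
    refine le_csInf ⟨1, Or.inl rfl⟩ ?_
    rintro u (hu | hu)
    · rw [mem_singleton_iff.1 hu]; exact (conv_mem hω hF x).2
    · by_contra h
      push Not at h
      have h1 := hhg.1 hu.1 (conv_mem hω hF x) h.le
      rw [← hfixG] at h1
      have := qi_le hG hGi hs (hu.2.trans h1)
      exact absurd hx (not_lt.2 this)

theorem int_eq {ω hg F G : ℝ → ℝ} (hω : IsAveragingKernel ω) (hhg : MemX hg)
    (hF : MemPsi F) (hG : MemPsi G)
    (hFi : Interpolates F 0 1) (hGi : Interpolates G 0 1)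
    (hfixG : ∀ x, G x = hg (conv F ω x)) {u : ℝ} (hu : u ∈ Icc (0:ℝ) 1) :
    ∫ x in (0:ℝ)..u, Xinv hg x =
      ∫ s in Ioo (0:ℝ) u, ∫ t in Ioo (0:ℝ) 1, Om ω (qi G s - qi F t) := by
  rw [intervalIntegral.integral_of_le hu.1, integral_Ioc_eq_integral_Ioo]
  exact setIntegral_congr_fun measurableSet_Ioo fun s hs =>
    Xinv_eq hω hhg hF hG hFi hGi hfixG ⟨hs.1, hs.2.trans_le hu.2⟩

theorem H_int {ω F G : ℝ → ℝ} (hω : IsAveragingKernel ω)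
    (hF : MemPsi F) (hG : MemPsi G)
    (hFi : Interpolates F 0 1) (hGi : Interpolates G 0 1) {u v : ℝ} (hu : u ≤ 1) (hv : v ≤ 1) :
    Integrable (fun p : ℝ × ℝ => Om ω (qi G p.1 - qi F p.2))
      ((volume.restrict (Ioo 0 u)).prod (volume.restrict (Ioo 0 v))) := by
  have hG' : AEMeasurable (qi G) (volume.restrict (Ioo 0 u)) :=
    (qi_aem hG hGi).mono_measure (Measure.restrict_mono (Ioo_subset_Ioo_right hu) le_rfl)
  have hF' : AEMeasurable (qi F) (volume.restrict (Ioo 0 v)) :=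
    (qi_aem hF hFi).mono_measure (Measure.restrict_mono (Ioo_subset_Ioo_right hv) le_rfl)
  refine Integrable.of_bound (C := 1) ?_ ?_
  · exact ((Om_cont hω).measurable.comp_aemeasurable (hG'.comp_fst.sub hF'.comp_snd)).aestronglyMeasurable
  · refine Eventually.of_forall fun t => ?_
    rw [Real.norm_of_nonneg (Om_nonneg hω _)]
    exact Om_le hω _

theorem sum_eq {ω F G : ℝ → ℝ} (hω : IsAveragingKernel ω)
    (hF : MemPsi F) (hG : MemPsi G)
    (hFi : Interpolates F 0 1) (hGi : Interpolates G 0 1) {u v : ℝ}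
    (hu : u ∈ Icc (0:ℝ) 1) (hv : v ∈ Icc (0:ℝ) 1) :
    (∫ s in Ioo (0:ℝ) u, ∫ t in Ioo (0:ℝ) v, Om ω (qi G s - qi F t)) +
      (∫ t in Ioo (0:ℝ) v, ∫ s in Ioo (0:ℝ) u, Om ω (qi F t - qi G s)) = u * v := by
  have h1 := H_int hω hF hG hFi hGi hu.2 hv.2
  have h2 := H_int hω hG hF hGi hFi hv.2 hu.2
  have h3 : (∫ t in Ioo (0:ℝ) v, ∫ s in Ioo (0:ℝ) u, Om ω (qi F t - qi G s)) =
      ∫ s in Ioo (0:ℝ) u, ∫ t in Ioo (0:ℝ) v, Om ω (qi F t - qi G s) := integral_integral_swap h2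
  have h4 : Integrable (fun p : ℝ × ℝ => Om ω (qi F p.2 - qi G p.1))
      ((volume.restrict (Ioo 0 u)).prod (volume.restrict (Ioo 0 v))) := h2.swap
  have h5 : (∫ s in Ioo (0:ℝ) u, ∫ t in Ioo (0:ℝ) v, Om ω (qi F t - qi G s)) =
      ∫ p : ℝ × ℝ, Om ω (qi F p.2 - qi G p.1)
      ∂((volume.restrict (Ioo 0 u)).prod (volume.restrict (Ioo 0 v))) := integral_integral h4
  rw [h3, integral_integral h1, h5, ← integral_add h1 h4]
  have : ∀ p : ℝ × ℝ, Om ω (qi G p.1 - qi F p.2) + Om ω (qi F p.2 - qi G p.1) = 1 := by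
    intro p
    rw [← Om_add hω (qi G p.1 - qi F p.2), neg_sub]
  simp only [this]
  simp [measureReal_def, Measure.prod_restrict, Measure.volume_eq_prod, Measure.prod_prod, hu.1, hv.1]

theorem trunc_le {ω F G : ℝ → ℝ} (hω : IsAveragingKernel ω)
    (hF : MemPsi F) (hG : MemPsi G)
    (hFi : Interpolates F 0 1) (hGi : Interpolates G 0 1) {u v : ℝ}
    (hu : u ∈ Icc (0:ℝ) 1) (hv : v ∈ Icc (0:ℝ) 1) :
    (∫ s in Ioo (0:ℝ) u, ∫ t in Ioo (0:ℝ) v, Om ω (qi G s - qi F t)) ≤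
    (∫ s in Ioo (0:ℝ) u, ∫ t in Ioo (0:ℝ) 1, Om ω (qi G s - qi F t)) := by
  have h1 := H_int hω hF hG hFi hGi hu.2 hv.2
  have h2 := H_int hω hF hG hFi hGi hu.2 (le_refl (1:ℝ))
  refine integral_mono h1.integral_prod_left h2.integral_prod_left fun s => ?_
  refine setIntegral_mono_set ?_ (Eventually.of_forall fun t => Om_nonneg hω _)
    (Ioo_subset_Ioo_right hv.2).eventuallyLE
  refine Integrable.of_bound (C := 1) (H_meas hω hF hFi _) (Eventually.of_forall fun t => ?_)
  rw [Real.norm_of_nonneg (Om_nonneg hω _)]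
  exact Om_le hω _

/-- **Continuum fixed point positivity.** -/
theorem continuum_fixed_point_positivity
    (ω hf hg F G : ℝ → ℝ)
    (hω : IsAveragingKernel ω) (hhf : MemX hf) (hhg : MemX hg)
    (hF : MemPsi F) (hG : MemPsi G)
    (hFi : Interpolates F 0 1) (hGi : Interpolates G 0 1)
    (hfixG : ∀ x, G x = hg (conv F ω x))
    (hfixF : ∀ x, F x = hf (conv G ω x)) :
    (∀ u ∈ Icc (0:ℝ) 1, ∀ v ∈ Icc (0:ℝ) 1, 0 ≤ Pot hf hg u v) ∧
      Agap hf hg = 0 := by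
  constructor
  · intro u hu v hv
    have e := sum_eq hω hF hG hFi hGi hu hv
    have a := trunc_le hω hF hG hFi hGi hu hv
    have b := trunc_le hω hG hF hGi hFi hv hu
    rw [Pot, int_eq hω hhg hF hG hFi hGi hfixG hu, int_eq hω hhf hG hF hGi hFi hfixF hv]
    linarith
  · have h1 : (1:ℝ) ∈ Icc (0:ℝ) 1 := ⟨zero_le_one, le_rfl⟩
    have e := sum_eq hω hF hG hFi hGi h1 h1
    rw [Agap, Pot, int_eq hω hhg hF hG hFi hGi hfixG h1, int_eq hω hhf hG hF hGi hFi hfixF h1]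
    linarith
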